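/- arXiv:2306.07587 — 2 statements merged into one kernel-verified Lean document; each statement's English description precedes it below -/
import Mathlib

section
/- Let p be a real polynomial in n variables, homogeneous of degree d ≥ 1, hyperbolic in direction e ∈ ℝⁿ with p(e) > 0, and suppose Λ₊ is regular. Let A ∈ ℝ^{m×n} have rank m, let b ∈ ℝᵐ with b ≠ 0, and let c ∈ ℝⁿ not lie in the row space of A. Then for any α ∈ (0,1) and any e' ∈ Λ₊₊ with Ae' = b, the quadratic program min{⟨c,x⟩ : Ax = b, x ∈ K_{e'}(α)} has at most one optimal solution: if x and x' both attain the minimum of ⟨c,·⟩ over {x : Ax = b} ∩ K_{e'}(α), then x = x'. -/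
open scoped BigOperators

/-- The univariate polynomial `t ↦ p(t • e - x)` associated to a multivariate polynomial `p`,
a direction `e` and a point `x`. -/
noncomputable def hypCharPoly {n : ℕ} (p : MvPolynomial (Fin n) ℝ) (e x : Fin n → ℝ) :
    Polynomial ℝ :=
  MvPolynomial.aeval (fun i => Polynomial.C (e i) * Polynomial.X - Polynomial.C (x i)) p

/-- `p` is a homogeneous polynomial of degree `d`, hyperbolic in direction `e`:
`p(e) ≠ 0` and for every `x` the polynomial `t ↦ p(t • e - x)` has `d` real roots
counted with multiplicity. -/
def IsHyperbolicPoly {n : ℕ} (p : MvPolynomial (Fin n) ℝ) (e : Fin n → ℝ) (d : ℕ) : Prop :=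
  p.IsHomogeneous d ∧ MvPolynomial.eval e p ≠ 0 ∧
    ∀ x : Fin n → ℝ, Multiset.card (hypCharPoly p e x).roots = d

/-- The (closed) hyperbolicity cone `Λ₊`: all hyperbolic eigenvalues are nonnegative. -/
def hypConeClosed {n : ℕ} (p : MvPolynomial (Fin n) ℝ) (e : Fin n → ℝ) : Set (Fin n → ℝ) :=
  {x | ∀ r ∈ (hypCharPoly p e x).roots, (0:ℝ) ≤ r}

/-- The open hyperbolicity cone `Λ₊₊`: all hyperbolic eigenvalues are positive. -/
def hypConeOpen {n : ℕ} (p : MvPolynomial (Fin n) ℝ) (e : Fin n → ℝ) : Set (Fin n → ℝ) :=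
  {x | ∀ r ∈ (hypCharPoly p e x).roots, (0:ℝ) < r}

/-- The gradient of `f(x) = -ln p(x)`, namely `g(x)ᵢ = -(∂ᵢ p)(x) / p(x)`. -/
noncomputable def gradNegLog {n : ℕ} (p : MvPolynomial (Fin n) ℝ) (x : Fin n → ℝ) :
    Fin n → ℝ :=
  fun i => -(MvPolynomial.eval x (MvPolynomial.pderiv i p)) / MvPolynomial.eval x p

/-- The Hessian of `f(x) = -ln p(x)`, namely
`H(x)ᵢⱼ = (∂ᵢp)(x)(∂ⱼp)(x)/p(x)² - (∂ᵢ∂ⱼp)(x)/p(x)`. -/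
noncomputable def hessNegLog {n : ℕ} (p : MvPolynomial (Fin n) ℝ) (x : Fin n → ℝ) :
    Matrix (Fin n) (Fin n) ℝ :=
  Matrix.of fun i j =>
    MvPolynomial.eval x (MvPolynomial.pderiv i p) * MvPolynomial.eval x (MvPolynomial.pderiv j p)
        / (MvPolynomial.eval x p) ^ 2
      - MvPolynomial.eval x (MvPolynomial.pderiv i (MvPolynomial.pderiv j p))
        / MvPolynomial.eval x p

/-- The local inner product `⟨u, v⟩_{e'} = uᵀ H(e') v`. -/
noncomputable def localIP {n : ℕ} (p : MvPolynomial (Fin n) ℝ) (e' u v : Fin n → ℝ) : ℝ :=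
  ∑ i, ∑ j, u i * hessNegLog p e' i j * v j

/-- The local norm `‖v‖_{e'} = ⟨v, v⟩_{e'}^{1/2}`. -/
noncomputable def localNorm {n : ℕ} (p : MvPolynomial (Fin n) ℝ) (e' v : Fin n → ℝ) : ℝ :=
  Real.sqrt (localIP p e' v v)

/-- The closed quadratic cone `K_{e'}(α) = {x : ⟨e', x⟩_{e'} ≥ α ‖x‖_{e'}}`. -/
noncomputable def quadCone {n : ℕ} (p : MvPolynomial (Fin n) ℝ) (e' : Fin n → ℝ) (α : ℝ) :
    Set (Fin n → ℝ) :=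
  {x | α * localNorm p e' x ≤ localIP p e' e' x}

/-- The hyperbolicity cone is regular: it contains no nonzero linear subspace. -/
def IsRegularCone {n : ℕ} (p : MvPolynomial (Fin n) ℝ) (e : Fin n → ℝ) : Prop :=
  ∀ W : Submodule ℝ (Fin n → ℝ), (W : Set (Fin n → ℝ)) ⊆ hypConeClosed p e → W = ⊥

/-- The univariate polynomial `t ↦ P(a + t • b)`. -/
noncomputable def lineRestrict {n : ℕ} {R : Type*} [CommRing R] (P : MvPolynomial (Fin n) R)
    (a b : Fin n → R) : Polynomial R :=
  MvPolynomial.aeval (fun i => Polynomial.C (a i) + Polynomial.C (b i) * Polynomial.X) P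

theorem eval_aeval_polynomial {n : ℕ} {R : Type*} [CommRing R] (P : MvPolynomial (Fin n) R)
    (f : Fin n → Polynomial R) (t : R) :
    (MvPolynomial.aeval f P).eval t = MvPolynomial.eval (fun i => (f i).eval t) P := by
  induction P using MvPolynomial.induction_on with
  | C a => simp
  | add p q hp hq => simp [hp, hq]
  | mul_X p i hp => simp [hp]

theorem eval_lineRestrict {n : ℕ} {R : Type*} [CommRing R] (P : MvPolynomial (Fin n) R)
    (a b : Fin n → R) (t : R) :
    (lineRestrict P a b).eval t = MvPolynomial.eval (a + t • b) P := by
  rw [lineRestrict, eval_aeval_polynomial]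
  congr 2
  ext i
  simp
  ring

theorem natDegree_lineRestrict_le {n : ℕ} {R : Type*} [CommRing R]
    (P : MvPolynomial (Fin n) R) (a b : Fin n → R) :
    (lineRestrict P a b).natDegree ≤ P.totalDegree := by
  have := MvPolynomial.aeval_natDegree_le (n := 1) P le_rfl
    (fun i => Polynomial.C (a i) + Polynomial.C (b i) * Polynomial.X)
    (fun i => by compute_degree)
  simpa [lineRestrict] using this

theorem derivative_lineRestrict {n : ℕ} {R : Type*} [CommRing R] (P : MvPolynomial (Fin n) R)
    (a b : Fin n → R) :
    Polynomial.derivative (lineRestrict P a b) =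
      ∑ i, Polynomial.C (b i) * lineRestrict (MvPolynomial.pderiv i P) a b := by
  unfold lineRestrict
  induction P using MvPolynomial.induction_on with
  | C a => simp
  | add p q hp hq => simp [hp, hq, mul_add, Finset.sum_add_distrib]
  | mul_X p j hp =>
    set φ := MvPolynomial.aeval (R := R)
      (fun i => Polynomial.C (a i) + Polynomial.C (b i) * Polynomial.X) with hφ
    have hX : φ (MvPolynomial.X j) = Polynomial.C (a j) + Polynomial.C (b j) * Polynomial.X := by
      rw [hφ, MvPolynomial.aeval_X]
    have hsum : ∀ i, Polynomial.C (b i) * φ (MvPolynomial.pderiv i (p * MvPolynomial.X j)) =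
        Polynomial.C (b i) * φ (MvPolynomial.pderiv i p) * φ (MvPolynomial.X j) +
          φ p * (if j = i then Polynomial.C (b i) else 0) := by
      intro i
      rw [MvPolynomial.pderiv_mul, MvPolynomial.pderiv_X, map_add, map_mul, map_mul]
      by_cases hij : j = i
      · subst hij
        simp only [Pi.single_eq_same, map_one, if_true]
        ring
      · simp only [Pi.single_eq_of_ne hij, map_zero, if_neg hij]
        ring
    rw [Finset.sum_congr rfl fun i _ => hsum i, Finset.sum_add_distrib, ← Finset.sum_mul,
      ← Finset.mul_sum, Finset.sum_ite_eq, if_pos (Finset.mem_univ j), ← hp, map_mul,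
      Polynomial.derivative_mul, hX]
    simp

theorem MvPolynomial.IsHomogeneous.eval_smul_pow {n d : ℕ} {R : Type*} [CommRing R]
    {P : MvPolynomial (Fin n) R} (hP : P.IsHomogeneous d) (t : R) (x : Fin n → R) :
    MvPolynomial.eval (t • x) P = t ^ d * MvPolynomial.eval x P := by
  rw [MvPolynomial.eval_eq, MvPolynomial.eval_eq, Finset.mul_sum]
  refine Finset.sum_congr rfl fun k hk => ?_
  have hdeg : ∑ i ∈ k.support, k i = d := by
    exact (hP.degree_eq_sum_deg_support hk).symm
  simp only [Pi.smul_apply, smul_eq_mul, mul_pow, Finset.prod_mul_distrib,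
    Finset.prod_pow_eq_pow_sum, hdeg]
  ring

/-- If a complex polynomial has no root in a ball, its values on the ball are controlled by its
value at the centre. -/
theorem norm_eval_le_of_no_roots_in_ball {Q : Polynomial ℂ} {d : ℕ} (hd : Q.natDegree ≤ d)
    {z w : ℂ} {ε : ℝ} (hw : w ∈ Metric.ball z ε) (hQ : ∀ r ∈ Metric.ball z ε, Q.eval r ≠ 0) :
    ‖Q.eval w‖ ≤ 2 ^ d * ‖Q.eval z‖ := by
  have hs : Q.Splits := IsAlgClosed.splits Q
  have key : ∀ m : Multiset ℂ, (∀ r ∈ m, r ∉ Metric.ball z ε) →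
      ‖(m.map (w - ·)).prod‖ ≤ 2 ^ m.card * ‖(m.map (z - ·)).prod‖ := by
    intro m
    induction m using Multiset.induction_on with
    | empty => simp
    | cons r m ih =>
      intro hm
      have h1 := ih fun r' hr' => hm r' (Multiset.mem_cons_of_mem hr')
      have h2 := hm r (Multiset.mem_cons_self r m)
      have h3 : ‖w - r‖ ≤ 2 * ‖z - r‖ := by
        rw [Metric.mem_ball, dist_comm, dist_eq_norm] at h2
        rw [Metric.mem_ball, dist_eq_norm] at hw
        calc ‖w - r‖ = ‖(w - z) + (z - r)‖ := by ring_nf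
          _ ≤ ‖w - z‖ + ‖z - r‖ := norm_add_le _ _
          _ ≤ 2 * ‖z - r‖ := by linarith
      simp only [Multiset.map_cons, Multiset.prod_cons, norm_mul, Multiset.card_cons, pow_succ]
      calc _ ≤ (2 * ‖z - r‖) * (2 ^ m.card * ‖(m.map (z - ·)).prod‖) := by gcongr
        _ = _ := by ring
  have hroots : ∀ r ∈ Q.roots, r ∉ Metric.ball z ε := fun r hr hb =>
    hQ r hb (Polynomial.isRoot_of_mem_roots hr)
  rw [hs.eval_eq_prod_roots w, hs.eval_eq_prod_roots z, norm_mul, norm_mul]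
  calc _ ≤ ‖Q.leadingCoeff‖ * (2 ^ Q.roots.card * ‖(Q.roots.map (z - ·)).prod‖) := by
        gcongr
        exact key _ hroots
    _ ≤ ‖Q.leadingCoeff‖ * (2 ^ d * ‖(Q.roots.map (z - ·)).prod‖) := by
        gcongr
        · norm_num
        · exact (Polynomial.card_roots' Q).trans hd
    _ = _ := by ring

/-- The roots `t` of `P(a + t • b)` are bounded uniformly for `a` in a bounded set. -/
theorem exists_root_bound {n d : ℕ} {P : MvPolynomial (Fin n) ℂ} (hP : P.IsHomogeneous d)
    {b : Fin n → ℂ} (hb : MvPolynomial.eval b P ≠ 0) (M : ℝ) :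
    ∃ R : ℝ, 0 < R ∧ ∀ a : Fin n → ℂ, ‖a‖ ≤ M → ∀ t : ℂ, R ≤ ‖t‖ →
      MvPolynomial.eval (a + t • b) P ≠ 0 := by
  have hc : ∀ᶠ y in nhds b, MvPolynomial.eval y P ≠ 0 :=
    (MvPolynomial.continuous_eval P).continuousAt.eventually_ne hb
  obtain ⟨δ, hδ, hball⟩ := Metric.eventually_nhds_iff.1 hc
  refine ⟨(|M| + 1) / δ, by positivity, fun a ha t ht h => ?_⟩
  have htpos : 0 < ‖t‖ := lt_of_lt_of_le (by positivity) ht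
  have ht0 : t ≠ 0 := norm_pos_iff.1 htpos
  have hsm : a + t • b = t • (b + t⁻¹ • a) := by
    rw [smul_add, smul_smul, mul_inv_cancel₀ ht0, one_smul, add_comm]
  rw [hsm, hP.eval_smul_pow] at h
  refine hball ?_ ((mul_eq_zero.1 h).resolve_left (pow_ne_zero _ ht0))
  rw [dist_eq_norm, add_sub_cancel_left, norm_smul, norm_inv, inv_mul_lt_iff₀ htpos]
  rw [div_le_iff₀ hδ] at ht
  linarith [le_abs_self M]

/-- If, along the family `P(u + s • w + t • b)`, no root `t` meets the line `ℓ = 0` for `s < 1`, and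
all roots lie in `ℓ < 0` for `s = 0`, then all roots lie in `ℓ ≤ 0` for `s = 1`. -/
theorem eval_ne_zero_of_homotopy {n d : ℕ} {P : MvPolynomial (Fin n) ℂ} (hP : P.IsHomogeneous d)
    (ℓ : ℂ →L[ℝ] ℝ) (u w b : Fin n → ℂ) (hb : MvPolynomial.eval b P ≠ 0)
    (h0 : ∀ t, 0 ≤ ℓ t → MvPolynomial.eval (u + t • b) P ≠ 0)
    (hbd : ∀ s : ℝ, 0 ≤ s → s < 1 → ∀ t, ℓ t = 0 →
      MvPolynomial.eval (u + (s : ℂ) • w + t • b) P ≠ 0)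
    (t : ℂ) (ht : 0 < ℓ t) : MvPolynomial.eval (u + w + t • b) P ≠ 0 := by
  intro hroot
  let F : ℝ × ℂ → ℂ := fun x => MvPolynomial.eval (u + (x.1 : ℂ) • w + x.2 • b) P
  have hF : Continuous F := (MvPolynomial.continuous_eval P).comp (by fun_prop)
  let T : Set (ℝ × ℂ) := {x | x.1 ∈ Set.Icc (0 : ℝ) 1 ∧ 0 ≤ ℓ x.2 ∧ F x = 0}
  obtain ⟨R, hR, hbound⟩ := exists_root_bound hP hb (‖u‖ + ‖w‖)
  have hA : ∀ s : ℝ, s ∈ Set.Icc (0 : ℝ) 1 → ‖u + (s : ℂ) • w‖ ≤ ‖u‖ + ‖w‖ := by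
    intro s hs
    refine (norm_add_le _ _).trans ?_
    rw [norm_smul, Complex.norm_real, Real.norm_of_nonneg hs.1]
    nlinarith [norm_nonneg w, hs.2]
  have hTclosed : IsClosed T := by
    refine IsClosed.inter (isClosed_Icc.preimage continuous_fst) (IsClosed.inter ?_ ?_)
    · exact isClosed_le continuous_const (ℓ.continuous.comp continuous_snd)
    · exact isClosed_eq hF continuous_const
  have hTcompact : IsCompact T := by
    refine ((isCompact_Icc (a := (0 : ℝ)) (b := 1)).prod (isCompact_closedBall (0 : ℂ) R)).of_isClosed_subset hTclosed ?_
    rintro ⟨s, z⟩ ⟨hs, -, hz⟩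
    refine ⟨hs, ?_⟩
    rw [mem_closedBall_zero_iff]
    by_contra! hlt
    exact hbound _ (hA s hs) z hlt.le hz
  have hT1 : ((1 : ℝ), t) ∈ T := ⟨by simp, ht.le, by simpa [F] using hroot⟩
  obtain ⟨⟨s, z⟩, ⟨hs, hz, hsz⟩, hmin⟩ :=
    hTcompact.exists_isMinOn ⟨_, hT1⟩ continuous_fst.continuousOn
  have hspos : 0 < s := by
    refine lt_of_le_of_ne hs.1 fun h => ?_
    subst h
    exact h0 z hz (by simpa [F] using hsz)
  obtain ⟨y, hy, hsy⟩ : ∃ y, 0 < ℓ y ∧ F (s, y) = 0 := by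
    rcases lt_or_eq_of_le hs.2 with h1 | h1
    · rcases lt_or_eq_of_le hz with h2 | h2
      · exact ⟨z, h2, hsz⟩
      · exact absurd hsz (hbd s hs.1 h1 z h2.symm)
    · refine ⟨t, ht, ?_⟩
      simp only at h1
      simpa [F, h1] using hroot
  obtain ⟨ε, hε, hball⟩ := Metric.isOpen_iff.1 (isOpen_lt continuous_const ℓ.continuous) y hy
  let Q : ℝ → Polynomial ℂ := fun r => lineRestrict P (u + (r : ℂ) • w) b
  have hQF : ∀ r x, (Q r).eval x = F (r, x) := fun r x => eval_lineRestrict _ _ _ _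
  have hQ0 : Q s ≠ 0 := by
    intro h
    refine hbound _ (hA s hs) (R : ℂ) ?_ ?_
    · rw [Complex.norm_real]; exact le_abs_self R
    · rw [← eval_lineRestrict]
      change (Q s).eval _ = 0
      rw [h, Polynomial.eval_zero]
  obtain ⟨x, hx, hxroot⟩ : ∃ x ∈ Metric.ball y ε, (Q s).eval x ≠ 0 := by
    by_contra! hall
    refine hQ0 (Polynomial.eq_zero_of_infinite_isRoot _ ?_)
    exact (infinite_of_mem_nhds y (Metric.ball_mem_nhds y hε)).mono hall
  have hle : ∀ᶠ r in nhdsWithin s (Set.Iio s), ‖F (r, x)‖ ≤ 2 ^ d * ‖F (r, y)‖ := by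
    filter_upwards [self_mem_nhdsWithin, nhdsWithin_le_nhds (lt_mem_nhds hspos)] with r hr hr0
    rw [← hQF, ← hQF]
    refine norm_eval_le_of_no_roots_in_ball
      ((natDegree_lineRestrict_le _ _ _).trans hP.totalDegree_le) hx fun z' hz' hz0 => ?_
    have hmem : (r, z') ∈ T :=
      ⟨⟨hr0.le, (le_of_lt hr).trans hs.2⟩, le_of_lt (hball hz'), by rw [← hQF]; exact hz0⟩
    exact absurd (Set.mem_Iio.1 hr) (not_lt.2 (hmin hmem))
  have hlim := le_of_tendsto_of_tendsto
    (((hF.comp (Continuous.prodMk_left x)).norm.tendsto s).mono_left nhdsWithin_le_nhds)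
    ((((hF.comp (Continuous.prodMk_left y)).norm.tendsto s).mono_left
      nhdsWithin_le_nhds).const_mul ((2 : ℝ) ^ d)) hle
  simp only [Function.comp, hsy, norm_zero, mul_zero] at hlim
  exact hxroot (by rw [hQF]; exact norm_le_zero_iff.1 hlim)

theorem eval_map_ofReal {n : ℕ} (p : MvPolynomial (Fin n) ℝ) (x : Fin n → ℝ) :
    MvPolynomial.eval (fun i => (x i : ℂ)) (p.map (algebraMap ℝ ℂ)) =
      (MvPolynomial.eval x p : ℂ) := by
  induction p using MvPolynomial.induction_on with
  | C a => simp
  | add p q hp hq => simp [hp, hq]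
  | mul_X p i hp => simp [hp]

theorem eval_map_aeval_ofReal {n : ℕ} (p : MvPolynomial (Fin n) ℝ)
    (f : Fin n → Polynomial ℝ) (t : ℂ) :
    ((MvPolynomial.aeval f p).map (algebraMap ℝ ℂ)).eval t =
      MvPolynomial.eval (fun i => ((f i).map (algebraMap ℝ ℂ)).eval t)
        (p.map (algebraMap ℝ ℂ)) := by
  induction p using MvPolynomial.induction_on with
  | C a => simp
  | add p q hp hq => simp [hp, hq]
  | mul_X p i hp => simp [hp]

theorem eval_hypCharPoly {n : ℕ} (p : MvPolynomial (Fin n) ℝ) (e x : Fin n → ℝ) (t : ℝ) :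
    (hypCharPoly p e x).eval t = MvPolynomial.eval (t • e - x) p := by
  rw [hypCharPoly, eval_aeval_polynomial]
  congr 2
  ext i
  simp
  ring

theorem hypCharPoly_ne_zero {n d : ℕ} (hd : 1 ≤ d) {p : MvPolynomial (Fin n) ℝ} {e : Fin n → ℝ}
    (hp : IsHyperbolicPoly p e d) (x : Fin n → ℝ) : hypCharPoly p e x ≠ 0 := by
  intro h
  have := hp.2.2 x
  simp [h] at this
  omega

theorem mem_roots_hypCharPoly {n d : ℕ} (hd : 1 ≤ d) {p : MvPolynomial (Fin n) ℝ}
    {e : Fin n → ℝ} (hp : IsHyperbolicPoly p e d) (x : Fin n → ℝ) (t : ℝ) :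
    t ∈ (hypCharPoly p e x).roots ↔ MvPolynomial.eval (t • e - x) p = 0 := by
  rw [Polynomial.mem_roots (hypCharPoly_ne_zero hd hp x), Polynomial.IsRoot, eval_hypCharPoly]

theorem hypCharPoly_splits {n d : ℕ} {p : MvPolynomial (Fin n) ℝ} {e : Fin n → ℝ}
    (hp : IsHyperbolicPoly p e d) (x : Fin n → ℝ) : (hypCharPoly p e x).Splits := by
  rw [Polynomial.splits_iff_card_roots]
  refine le_antisymm (Polynomial.card_roots' _) ?_
  rw [hp.2.2 x]
  have := MvPolynomial.aeval_natDegree_le (n := 1) p hp.1.totalDegree_le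
    (fun i => Polynomial.C (e i) * Polynomial.X - Polynomial.C (x i))
    (fun i => by compute_degree)
  simpa [hypCharPoly] using this

/-- Complex roots in a hyperbolicity direction, at a real base point, are real. -/
theorem im_eq_zero_of_eval_eq_zero {n d : ℕ} (hd : 1 ≤ d) {p : MvPolynomial (Fin n) ℝ}
    {e : Fin n → ℝ} (hp : IsHyperbolicPoly p e d) (x : Fin n → ℝ) {t : ℂ}
    (h : MvPolynomial.eval (fun i => t * e i - x i) (p.map (algebraMap ℝ ℂ)) = 0) :
    t.im = 0 := by
  have hr : ((hypCharPoly p e x).map (algebraMap ℝ ℂ)).IsRoot t := by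
    rw [Polynomial.IsRoot, hypCharPoly, eval_map_aeval_ofReal, ← h]
    congr 2
    ext i
    simp
    ring
  obtain ⟨r, rfl⟩ := (hypCharPoly_splits hp x).mem_range_of_isRoot (hypCharPoly_ne_zero hd hp x) hr
  simp

theorem eval_ne_zero_of_mem_hypConeOpen {n d : ℕ} (hd : 1 ≤ d) {p : MvPolynomial (Fin n) ℝ}
    {e e' : Fin n → ℝ} (hp : IsHyperbolicPoly p e d) (he' : e' ∈ hypConeOpen p e) :
    MvPolynomial.eval e' p ≠ 0 := by
  intro h
  refine lt_irrefl (0 : ℝ) (he' 0 ((mem_roots_hypCharPoly hd hp e' 0).2 ?_))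
  have h1 : (0 : ℝ) • e - e' = (-1 : ℝ) • e' := by simp
  rw [h1, hp.1.eval_smul_pow, h, mul_zero]

theorem exists_pos_of_eval_eq_zero {n d : ℕ} (hd : 1 ≤ d) {p : MvPolynomial (Fin n) ℝ}
    {e e' : Fin n → ℝ} (hp : IsHyperbolicPoly p e d) (he' : e' ∈ hypConeOpen p e) {t : ℂ}
    (h : MvPolynomial.eval (fun i => t * e i - e' i) (p.map (algebraMap ℝ ℂ)) = 0) :
    ∃ r : ℝ, 0 < r ∧ t = r := by
  have him := im_eq_zero_of_eval_eq_zero hd hp e' h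
  have htr : t = (t.re : ℂ) := Complex.ext (by simp) (by simp [him])
  refine ⟨t.re, he' _ ((mem_roots_hypCharPoly hd hp e' _).2 ?_), htr⟩
  have h2 := eval_map_ofReal p (t.re • e - e')
  rw [htr] at h
  have h3 : (fun i => (((t.re • e - e') i : ℝ) : ℂ)) = fun i => (t.re : ℂ) * e i - e' i := by
    ext i; simp
  rw [h3, h] at h2
  exact_mod_cast h2.symm

/-- Gårding: `p` is hyperbolic in every direction of the open hyperbolicity cone. -/
theorem eval_ne_zero_of_im_pos {n d : ℕ} (hd : 1 ≤ d) {p : MvPolynomial (Fin n) ℝ}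
    {e e' : Fin n → ℝ} (hp : IsHyperbolicPoly p e d) (he' : e' ∈ hypConeOpen p e)
    (x : Fin n → ℝ) {t : ℂ} (ht : 0 < t.im) :
    MvPolynomial.eval (fun i => x i + t * e' i) (p.map (algebraMap ℝ ℂ)) ≠ 0 := by
  have hP := hp.1.map (algebraMap ℝ ℂ)
  have key := eval_ne_zero_of_homotopy hP Complex.imCLM (fun i => Complex.I * e i)
    (fun i => x i - Complex.I * e i) (fun i => (e' i : ℂ)) ?_ ?_ ?_ t ht
  · convert key using 3
    ext i
    simp
  · rw [eval_map_ofReal]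
    exact_mod_cast eval_ne_zero_of_mem_hypConeOpen hd hp he'
  · intro z hz h
    simp only [Complex.imCLM_apply] at hz
    by_cases hz0 : z = 0
    · subst hz0
      have h1 : ((fun i => Complex.I * e i) + (0 : ℂ) • fun i => (e' i : ℂ)) =
          Complex.I • fun i => (e i : ℂ) := by ext i; simp
      rw [h1, hP.eval_smul_pow, eval_map_ofReal] at h
      have := (mul_eq_zero.1 h).resolve_left (pow_ne_zero _ Complex.I_ne_zero)
      exact hp.2.1 (by exact_mod_cast this)
    · have h1 : ((fun i => Complex.I * e i) + z • fun i => (e' i : ℂ)) =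
          (-z) • fun i => (-Complex.I / z) * e i - (e' i : ℂ) := by
        ext i
        simp only [Pi.add_apply, Pi.smul_apply, smul_eq_mul]
        field_simp
        ring
      rw [h1, hP.eval_smul_pow] at h
      obtain ⟨r, hr, hzr⟩ := exists_pos_of_eval_eq_zero hd hp he'
        ((mul_eq_zero.1 h).resolve_left (pow_ne_zero _ (neg_ne_zero.2 hz0)))
      rw [div_eq_iff hz0] at hzr
      have := congrArg Complex.im hzr
      simp at this
      nlinarith
  · intro s _ hs1 z hz h
    simp only [Complex.imCLM_apply] at hz
    have hzr : z = (z.re : ℂ) := Complex.ext (by simp) (by simp [hz])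
    have h1 := im_eq_zero_of_eval_eq_zero hd hp (t := (1 - s : ℝ) * Complex.I)
      (-(s • x + z.re • e')) ?_
    · simp at h1
      linarith
    · rw [← h]
      congr 2
      ext i
      simp only [Pi.neg_apply, Pi.add_apply, Pi.smul_apply, smul_eq_mul]
      nth_rewrite 2 [hzr]
      push_cast
      ring

/-- A direction along which `p` does not vanish from `e'` lies in the closed cone. -/
theorem mem_hypConeClosed_of_forall_eval_ne_zero {n d : ℕ} (hd : 1 ≤ d)
    {p : MvPolynomial (Fin n) ℝ} {e e' : Fin n → ℝ} (hp : IsHyperbolicPoly p e d)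
    (he' : e' ∈ hypConeOpen p e) (v : Fin n → ℝ)
    (hv : ∀ s : ℝ, MvPolynomial.eval (e' + s • v) p ≠ 0) : v ∈ hypConeClosed p e := by
  have hP := hp.1.map (algebraMap ℝ ℂ)
  intro r hr
  by_contra! hneg
  refine eval_ne_zero_of_homotopy hP (-Complex.reCLM) (fun i => -(e' i : ℂ))
    (fun i => (e' i : ℂ) - v i) (fun i => (e i : ℂ)) ?_ ?_ ?_ (r : ℂ) (by simpa using hneg) ?_
  · rw [eval_map_ofReal]
    exact_mod_cast hp.2.1
  · intro z hz h
    obtain ⟨r, hr, rfl⟩ := exists_pos_of_eval_eq_zero hd hp he' (t := z) (by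
      rw [← h]
      congr 2
      ext i
      simp only [Pi.add_apply, Pi.smul_apply, smul_eq_mul]
      ring)
    simp at hz
    linarith
  · intro s _ hs1 z hz h
    have him := im_eq_zero_of_eval_eq_zero hd hp (t := z) ((1 - s) • e' + s • v) (by
      rw [← h]
      congr 2
      ext i
      simp only [Pi.add_apply, Pi.smul_apply, smul_eq_mul]
      push_cast
      ring)
    have hz0 : z = 0 := Complex.ext (by simpa using hz) (by simpa using him)
    have hs : (1 - s) ≠ 0 := by linarith
    have h2 := eval_map_ofReal p ((-(1 - s)) • (e' + (s / (1 - s)) • v))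
    have h3 : (fun i => ((((-(1 - s)) • (e' + (s / (1 - s)) • v)) i : ℝ) : ℂ)) =
        (fun i => -(e' i : ℂ)) + (s : ℂ) • (fun i => (e' i : ℂ) - v i) +
          z • fun i => (e i : ℂ) := by
      ext i
      have : (-(1 - s)) * (e' i + s / (1 - s) * v i) = - e' i + s * (e' i - v i) := by
        field_simp
        ring
      simp only [hz0, Pi.add_apply, Pi.smul_apply, smul_eq_mul, this]
      push_cast
      ring
    rw [h3, h, hp.1.eval_smul_pow] at h2
    have h4 : (-(1 - s)) ^ d * MvPolynomial.eval (e' + (s / (1 - s)) • v) p = 0 := by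
      exact_mod_cast h2.symm
    exact hv _ ((mul_eq_zero.1 h4).resolve_left (pow_ne_zero _ (neg_ne_zero.2 hs)))
  · have h1 := (mem_roots_hypCharPoly hd hp v r).1 hr
    have h2 := eval_map_ofReal p (r • e - v)
    rw [h1, Complex.ofReal_zero] at h2
    rw [← h2]
    congr 2
    ext i
    simp only [Pi.add_apply, Pi.sub_apply, Pi.smul_apply, smul_eq_mul]
    push_cast
    ring

/-- The strict Laguerre inequality at `0` for a product of real linear factors. -/
theorem laguerre_multiset_prod (m : Multiset ℝ) (h0 : (0 : ℝ) ∉ m) :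
    let f := (m.map (fun r => Polynomial.X - Polynomial.C r)).prod
    f.eval 0 ≠ 0 ∧
    (0 : ℝ) ≤ f.derivative.eval 0 ^ 2 - f.eval 0 * f.derivative.derivative.eval 0 ∧
    (m ≠ 0 → (0 : ℝ) < f.derivative.eval 0 ^ 2 - f.eval 0 * f.derivative.derivative.eval 0) := by
  induction m using Multiset.induction_on with
  | empty => simp
  | cons r m ih =>
    obtain ⟨h1, h2, -⟩ := ih fun h => h0 (Multiset.mem_cons_of_mem h)
    have hr : r ≠ 0 := fun h => h0 (h ▸ Multiset.mem_cons_self r m)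
    simp only [Multiset.map_cons, Multiset.prod_cons]
    set f := (m.map (fun r => Polynomial.X - Polynomial.C r)).prod
    have hpos : (0 : ℝ) < (Polynomial.derivative ((Polynomial.X - Polynomial.C r) * f)).eval 0 ^ 2
        - ((Polynomial.X - Polynomial.C r) * f).eval 0 *
          (Polynomial.derivative (Polynomial.derivative
            ((Polynomial.X - Polynomial.C r) * f))).eval 0 := by
      have : (Polynomial.derivative ((Polynomial.X - Polynomial.C r) * f)).eval 0 ^ 2
        - ((Polynomial.X - Polynomial.C r) * f).eval 0 *
          (Polynomial.derivative (Polynomial.derivative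
            ((Polynomial.X - Polynomial.C r) * f))).eval 0 =
          f.eval 0 ^ 2 + r ^ 2 * (f.derivative.eval 0 ^ 2 -
            f.eval 0 * f.derivative.derivative.eval 0) := by
        simp
        ring
      rw [this]
      have : 0 < f.eval 0 ^ 2 := by positivity
      have := mul_nonneg (sq_nonneg r) h2
      linarith
    exact ⟨by simpa using ⟨hr, h1⟩, hpos.le, fun _ => hpos⟩

theorem Polynomial.Splits.laguerre_pos {q : Polynomial ℝ} (hq : q.Splits) (h0 : q.eval 0 ≠ 0)
    (hroots : q.roots ≠ 0) :
    (0 : ℝ) < q.derivative.eval 0 ^ 2 - q.eval 0 * q.derivative.derivative.eval 0 := by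
  have hlc : q.leadingCoeff ≠ 0 := by
    intro h
    rw [Polynomial.leadingCoeff_eq_zero] at h
    simp [h] at h0
  have hmem : (0 : ℝ) ∉ q.roots := fun h => h0 (Polynomial.isRoot_of_mem_roots h)
  have hpos := (laguerre_multiset_prod q.roots hmem).2.2 hroots
  have heq := hq.eq_prod_roots
  set f := (q.roots.map (fun r => Polynomial.X - Polynomial.C r)).prod
  have : q.derivative.eval 0 ^ 2 - q.eval 0 * q.derivative.derivative.eval 0 =
      q.leadingCoeff ^ 2 * (f.derivative.eval 0 ^ 2 -
        f.eval 0 * f.derivative.derivative.eval 0) := by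
    generalize q.leadingCoeff = a at heq
    rw [heq]
    simp
    ring
  rw [this]
  positivity

theorem lineRestrict_splits {n d : ℕ} (hd : 1 ≤ d) {p : MvPolynomial (Fin n) ℝ}
    {e e' : Fin n → ℝ} (hp : IsHyperbolicPoly p e d) (he' : e' ∈ hypConeOpen p e)
    (v : Fin n → ℝ) : (lineRestrict p e' v).Splits := by
  have hP := hp.1.map (algebraMap ℝ ℂ)
  refine Polynomial.Splits.of_splits_map (algebraMap ℝ ℂ) (IsAlgClosed.splits _) fun s hs => ?_
  have hroot := Polynomial.isRoot_of_mem_roots hs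
  rw [Polynomial.IsRoot, lineRestrict, eval_map_aeval_ofReal] at hroot
  refine ⟨s.re, Complex.ext (by simp) ?_⟩
  by_contra him
  have him' : s.im ≠ 0 := fun h => him (by simp [h])
  have hs0 : s ≠ 0 := fun h => him' (by simp [h])
  have hN : 0 < Complex.normSq s := Complex.normSq_pos.2 hs0
  rcases lt_or_gt_of_ne him' with hlt | hgt
  · refine eval_ne_zero_of_im_pos hd hp he' v (t := s⁻¹) ?_ ?_
    · rw [Complex.inv_im]
      exact div_pos (neg_pos.2 hlt) hN
    · have h1 : (fun i => (v i : ℂ) + s⁻¹ * e' i) = s⁻¹ • fun i => ((Polynomial.C (e' i) +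
          Polynomial.C (v i) * Polynomial.X).map (algebraMap ℝ ℂ)).eval s := by
        ext i
        simp
        field_simp
        ring
      rw [h1, hP.eval_smul_pow, hroot, mul_zero]
  · refine eval_ne_zero_of_im_pos hd hp he' (-v) (t := -s⁻¹) ?_ ?_
    · rw [Complex.neg_im, Complex.inv_im, neg_div, neg_neg]
      exact div_pos hgt hN
    · have h1 : (fun i => ((-v) i : ℂ) + -s⁻¹ * e' i) = (-s⁻¹) • fun i => ((Polynomial.C (e' i) +
          Polynomial.C (v i) * Polynomial.X).map (algebraMap ℝ ℂ)).eval s := by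
        ext i
        simp
        field_simp
        ring
      rw [h1, hP.eval_smul_pow, hroot, mul_zero]

theorem localIP_self_eq {n : ℕ} (p : MvPolynomial (Fin n) ℝ) (e' v : Fin n → ℝ)
    (h : MvPolynomial.eval e' p ≠ 0) :
    localIP p e' v v =
      ((lineRestrict p e' v).derivative.eval 0 ^ 2 - (lineRestrict p e' v).eval 0 *
        (lineRestrict p e' v).derivative.derivative.eval 0) / (MvPolynomial.eval e' p) ^ 2 := by
  simp only [derivative_lineRestrict, Polynomial.derivative_sum, Polynomial.derivative_C_mul,
    Polynomial.eval_finsetSum, Polynomial.eval_mul, Polynomial.eval_C, eval_lineRestrict,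
    zero_smul, add_zero]
  rw [sq (∑ i, _), Finset.sum_mul_sum, Finset.mul_sum, ← Finset.sum_sub_distrib, Finset.sum_div,
    localIP, Finset.sum_comm]
  refine Finset.sum_congr rfl fun j _ => ?_
  rw [Finset.mul_sum, Finset.mul_sum, ← Finset.sum_sub_distrib, Finset.sum_div]
  refine Finset.sum_congr rfl fun i _ => ?_
  simp only [hessNegLog, Matrix.of_apply]
  field_simp

/-- On a regular cone the local inner product is positive definite. -/
theorem localIP_self_pos {n d : ℕ} (hd : 1 ≤ d) {p : MvPolynomial (Fin n) ℝ}
    {e e' : Fin n → ℝ} (hp : IsHyperbolicPoly p e d) (hreg : IsRegularCone p e)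
    (he' : e' ∈ hypConeOpen p e) {v : Fin n → ℝ} (hv : v ≠ 0) : 0 < localIP p e' v v := by
  have hpe' := eval_ne_zero_of_mem_hypConeOpen hd hp he'
  rw [localIP_self_eq p e' v hpe']
  have h0 : (lineRestrict p e' v).eval 0 ≠ 0 := by simpa [eval_lineRestrict] using hpe'
  refine div_pos ((lineRestrict_splits hd hp he' v).laguerre_pos h0 fun hroots => hv ?_)
    (by positivity)
  have hq0 : lineRestrict p e' v ≠ 0 := fun h => h0 (by simp [h])
  have hne : ∀ s : ℝ, MvPolynomial.eval (e' + s • v) p ≠ 0 := by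
    intro s hs
    have : s ∈ (lineRestrict p e' v).roots := by
      rw [Polynomial.mem_roots hq0, Polynomial.IsRoot, eval_lineRestrict, hs]
    simp [hroots] at this
  rw [← Submodule.span_singleton_eq_bot (R := ℝ)]
  refine hreg _ fun w hw => ?_
  obtain ⟨a, rfl⟩ := Submodule.mem_span_singleton.1 hw
  exact mem_hypConeClosed_of_forall_eval_ne_zero hd hp he' _ fun s => by
    rw [smul_smul]; exact hne _

theorem localIP_eq_toLinearMap₂' {n : ℕ} (p : MvPolynomial (Fin n) ℝ) (e' u v : Fin n → ℝ) :
    localIP p e' u v = Matrix.toLinearMap₂' ℝ (hessNegLog p e') u v := by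
  rw [Matrix.toLinearMap₂'_apply, localIP]
  refine Finset.sum_congr rfl fun i _ => Finset.sum_congr rfl fun j _ => ?_
  simp only [smul_eq_mul]
  ring

/-- Strict triangle inequality for a positive definite, not necessarily symmetric, form. -/
theorem sqrt_add_lt_of_pos_def {V : Type*} [AddCommGroup V] [Module ℝ V]
    (B : V →ₗ[ℝ] V →ₗ[ℝ] ℝ) (hB : ∀ v, v ≠ 0 → 0 < B v v) {x y : V} (hx : x ≠ 0) (hy : y ≠ 0)
    (hxy : ∀ a b : ℝ, 0 < a → 0 < b → a • x ≠ b • y) :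
    √(B (x + y) (x + y)) < √(B x x) + √(B y y) := by
  have ha := Real.sqrt_pos.2 (hB x hx)
  have hb := Real.sqrt_pos.2 (hB y hy)
  have hxx := Real.sq_sqrt (hB x hx).le
  have hyy := Real.sq_sqrt (hB y hy).le
  set a := √(B x x)
  set b := √(B y y)
  have hpos := hB (b • x - a • y) (sub_ne_zero.2 (hxy b a hb ha))
  simp only [map_sub, map_smul, LinearMap.sub_apply, LinearMap.smul_apply, smul_eq_mul] at hpos
  rw [← hxx, ← hyy] at hpos
  have h1 : 0 < (a * b) * (2 * (a * b) - (B x y + B y x)) := by nlinarith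
  have h2 := pos_of_mul_pos_right h1 (mul_pos ha hb).le
  rw [Real.sqrt_lt' (by positivity)]
  simp only [map_add, LinearMap.add_apply]
  nlinarith

/-- A functional outside the row space decreases along some kernel direction. -/
theorem exists_mulVec_eq_zero_of_not_mem_rowSpace {m n : ℕ} (A : Matrix (Fin m) (Fin n) ℝ)
    (c : Fin n → ℝ) (hc : ¬ ∃ y : Fin m → ℝ, Matrix.vecMul y A = c) :
    ∃ u : Fin n → ℝ, A.mulVec u = 0 ∧ c ⬝ᵥ u < 0 := by
  by_contra! hall
  apply hc
  have hzero : ∀ u, A.mulVec u = 0 → c ⬝ᵥ u = 0 := by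
    intro u hu
    have h1 := hall u hu
    have h2 := hall (-u) (by rw [Matrix.mulVec_neg, hu, neg_zero])
    rw [dotProduct_neg] at h2
    linarith
  have hmem : dotProductBilin ℝ ℝ c ∈ LinearMap.range A.mulVecLin.dualMap := by
    rw [LinearMap.range_dualMap_eq_dualAnnihilator_ker, Submodule.mem_dualAnnihilator]
    intro u hu
    exact hzero u hu
  obtain ⟨ψ, hψ⟩ := hmem
  refine ⟨fun j => ψ (fun k => if j = k then 1 else 0), funext fun i => ?_⟩
  have h1 := LinearMap.congr_fun hψ (Pi.single i 1)
  have h2 : ψ (A.mulVec (Pi.single i 1)) = c i := by simpa using h1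
  rw [← h2, LinearMap.pi_apply_eq_sum_univ ψ]
  simp [Matrix.vecMul, dotProduct, mul_comm]

/-- uniqueness of the optimal solution of `QP_{e'}(α)`.
Under the standing assumptions (`A` of full row rank, `b ≠ 0`, `c` not in the row space of `A`,
`Λ₊` regular), for `α ∈ (0,1)` and `e' ∈ Λ₊₊` with `Ae' = b`, the quadratic program
`min {⟨c, x⟩ : Ax = b, x ∈ K_{e'}(α)}` has at most one optimal solution. -/
theorem stmt10 {n m d : ℕ} (hd : 1 ≤ d) (p : MvPolynomial (Fin n) ℝ) (e : Fin n → ℝ)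
    (hp : IsHyperbolicPoly p e d) (hpe : 0 < MvPolynomial.eval e p)
    (hreg : IsRegularCone p e)
    (A : Matrix (Fin m) (Fin n) ℝ) (hA : A.rank = m)
    (b : Fin m → ℝ) (hb : b ≠ 0)
    (c : Fin n → ℝ) (hc : ¬ ∃ y : Fin m → ℝ, Matrix.vecMul y A = c)
    (α : ℝ) (hα : 0 < α) (hα1 : α < 1)
    (e' : Fin n → ℝ) (he' : e' ∈ hypConeOpen p e) (hAe : A.mulVec e' = b)
    (x x' : Fin n → ℝ)
    (hxfeas : A.mulVec x = b ∧ x ∈ quadCone p e' α)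
    (hxfeas' : A.mulVec x' = b ∧ x' ∈ quadCone p e' α)
    (hxopt : ∀ z : Fin n → ℝ, A.mulVec z = b → z ∈ quadCone p e' α →
      (∑ i, c i * x i) ≤ ∑ i, c i * z i)
    (hxopt' : ∀ z : Fin n → ℝ, A.mulVec z = b → z ∈ quadCone p e' α →
      (∑ i, c i * x' i) ≤ ∑ i, c i * z i) :
    x = x' := by
  have hB : ∀ v : Fin n → ℝ, v ≠ 0 → 0 < Matrix.toLinearMap₂' ℝ (hessNegLog p e') v v :=
    fun v hv => by
      rw [← localIP_eq_toLinearMap₂']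
      exact localIP_self_pos hd hp hreg he' hv
  obtain ⟨hAx, hx⟩ := hxfeas
  obtain ⟨hAx', hx'⟩ := hxfeas'
  simp only [quadCone, Set.mem_ofPred_eq, localNorm, localIP_eq_toLinearMap₂'] at hx hx' hxopt
  set B : (Fin n → ℝ) →ₗ[ℝ] (Fin n → ℝ) →ₗ[ℝ] ℝ := Matrix.toLinearMap₂' ℝ (hessNegLog p e')
  by_contra hne
  have hx0 : x ≠ 0 := fun h => hb (by rw [← hAx, h, Matrix.mulVec_zero])
  have hx0' : x' ≠ 0 := fun h => hb (by rw [← hAx', h, Matrix.mulVec_zero])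
  have hpar : ∀ r s : ℝ, 0 < r → 0 < s → r • x ≠ s • x' := by
    intro r s hr _ h
    have h1 := congrArg A.mulVec h
    rw [Matrix.mulVec_smul, Matrix.mulVec_smul, hAx, hAx'] at h1
    have hrs : r = s := smul_left_injective ℝ hb h1
    subst hrs
    exact hne (smul_right_injective _ hr.ne' h)
  have hstrict := sqrt_add_lt_of_pos_def B hB hx0 hx0' hpar
  obtain ⟨u, hAu, hcu⟩ := exists_mulVec_eq_zero_of_not_mem_rowSpace A c hc
  have hlt : α * √(B (x + x' + (0 : ℝ) • u) (x + x' + (0 : ℝ) • u)) <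
      B e' (x + x' + (0 : ℝ) • u) := by
    rw [zero_smul, add_zero, map_add (B e')]
    nlinarith
  have hcont : Continuous fun t : ℝ => B (x + x' + t • u) (x + x' + t • u) := by
    simp only [map_add, map_smul, LinearMap.add_apply, LinearMap.smul_apply]
    fun_prop
  have hcont' : Continuous fun t : ℝ => B e' (x + x' + t • u) := by
    simp only [map_add, map_smul]
    fun_prop
  have hev : ∀ᶠ t in nhds (0 : ℝ), α * √(B (x + x' + t • u) (x + x' + t • u)) <
      B e' (x + x' + t • u) :=
    ((hcont.sqrt.const_mul α).continuousAt).eventually_lt hcont'.continuousAt hlt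
  obtain ⟨t, ht, htpos⟩ :=
    ((hev.filter_mono nhdsWithin_le_nhds).and (self_mem_nhdsWithin (s := Set.Ioi (0 : ℝ)))).exists
  have hsc : √(B ((1 / 2 : ℝ) • (x + x' + t • u)) ((1 / 2 : ℝ) • (x + x' + t • u))) =
      (1 / 2) * √(B (x + x' + t • u) (x + x' + t • u)) := by
    rw [map_smul, map_smul, LinearMap.smul_apply, smul_eq_mul, smul_eq_mul, ← mul_assoc,
      Real.sqrt_mul (by norm_num), Real.sqrt_mul_self (by norm_num)]
  have hz := hxopt ((1 / 2 : ℝ) • (x + x' + t • u)) (by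
      rw [Matrix.mulVec_smul, Matrix.mulVec_add, Matrix.mulVec_add, Matrix.mulVec_smul, hAx, hAx',
        hAu, smul_zero, add_zero, ← two_smul ℝ b, smul_smul]
      norm_num) (by
      rw [hsc, map_smul, smul_eq_mul]
      linarith)
  have hxx' := hxopt' x hAx (by
    simpa only [quadCone, Set.mem_ofPred_eq, localNorm, localIP_eq_toLinearMap₂'] using hx)
  have hx'x := hxopt x' hAx' hx'
  change c ⬝ᵥ x ≤ c ⬝ᵥ _ at hz
  change c ⬝ᵥ x' ≤ c ⬝ᵥ x at hxx'
  change c ⬝ᵥ x ≤ c ⬝ᵥ x' at hx'x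
  rw [dotProduct_smul, dotProduct_add, dotProduct_add, dotProduct_smul, smul_eq_mul,
    smul_eq_mul] at hz
  have := mul_neg_of_pos_of_neg (Set.mem_Ioi.1 htpos) hcu
  linarith
end

section
/- Fix 0 < α < 1 and a nonzero symmetric matrix X ∈ ℝ^{d×d} (d ≥ 2) with tr X = α·(tr(X²))^{1/2}; set S = (1/(d−α²))·(I − (α²/tr X)·X), q(t) = tr(((I+tX)S)²), E(t) = (1/(1+t))·(I+tX), and β = α·√((1+α)/2). Then q is a strictly convex quadratic polynomial whose minimizer t̄ satisfies t̄ > α/(2‖X‖_F), and setting δ = t̄ − α/(2‖X‖_F) > 0, for every t ∈ [t̄ − δ, t̄ + δ]: E(t) is positive definite and tr(SZ) > 0 for every nonzero Z ∈ K_{E(t)}(β). -/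
open scoped BigOperators

/-- The matrix quadratic cone
`K_E(β) = {Z symmetric : tr(E⁻¹Z) ≥ β (tr((E⁻¹Z)²))^{1/2}}` for a positive definite `E`. -/
noncomputable def matQuadCone {d : ℕ} (E : Matrix (Fin d) (Fin d) ℝ) (β : ℝ) :
    Set (Matrix (Fin d) (Fin d) ℝ) :=
  {Z | Z.IsSymm ∧ β * Real.sqrt ((E⁻¹ * Z * (E⁻¹ * Z)).trace) ≤ (E⁻¹ * Z).trace}

open Matrix Unitary

/-- If `w` lies strictly inside the cone dual to `{b : β ‖b‖ ≤ ∑ b}`, then it pairs positively with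
every `b` of that cone whose coordinate sum is positive. -/
lemma sum_mul_pos_of_cone {ι : Type*} [Fintype ι] (w b : ι → ℝ) {B : ℝ} (hB : 0 < B)
    (hBd : B < Fintype.card ι) (hw : 0 < ∑ i, w i)
    (hw2 : (Fintype.card ι - B) * ∑ i, w i ^ 2 < (∑ i, w i) ^ 2)
    (hb : 0 < ∑ i, b i) (hb2 : B * ∑ i, b i ^ 2 ≤ (∑ i, b i) ^ 2) :
    0 < ∑ i, w i * b i := by
  by_contra! hneg
  set n : ℝ := (Fintype.card ι : ℝ)
  set W := ∑ i, w i
  set V := ∑ i, b i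
  set y := (n - B) * V
  set x := B * W
  have hy : 0 < y := mul_pos (by linarith) hb
  have hx : 0 < x := mul_pos hB hw
  have hlin : ∑ i, (y * w i + x * b i) = n * (W * V) := by
    rw [Finset.sum_add_distrib, ← Finset.mul_sum, ← Finset.mul_sum]
    simp only [y, x, W, V]
    ring
  have hquad : ∑ i, (y * w i + x * b i) ^ 2
      = y ^ 2 * ∑ i, w i ^ 2 + 2 * (x * y) * ∑ i, w i * b i + x ^ 2 * ∑ i, b i ^ 2 := by
    simp only [Finset.mul_sum, ← Finset.sum_add_distrib]
    exact Finset.sum_congr rfl fun i _ => by ring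
  have hcs : (∑ i, (y * w i + x * b i)) ^ 2 ≤ n * ∑ i, (y * w i + x * b i) ^ 2 := by
    simpa [n] using sq_sum_le_card_mul_sum_sq (s := Finset.univ) (f := fun i => y * w i + x * b i)
  rw [hlin, hquad] at hcs
  have hn : 0 < n := hB.trans hBd
  have h1 : y ^ 2 * ∑ i, w i ^ 2 < (n - B) * V ^ 2 * W ^ 2 := by
    have := mul_lt_mul_of_pos_left hw2 (show 0 < (n - B) * V ^ 2 by
      exact mul_pos (by linarith) (by positivity))
    simp only [y]
    linarith
  have h2 : x ^ 2 * ∑ i, b i ^ 2 ≤ B * W ^ 2 * V ^ 2 := by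
    have := mul_le_mul_of_nonneg_left hb2 (show 0 ≤ B * W ^ 2 by positivity)
    simp only [x]
    linarith
  have h3 : 2 * (x * y) * ∑ i, w i * b i ≤ 0 :=
    mul_nonpos_of_nonneg_of_nonpos (by positivity) hneg
  have h4 : n * (y ^ 2 * ∑ i, w i ^ 2 + 2 * (x * y) * ∑ i, w i * b i + x ^ 2 * ∑ i, b i ^ 2)
      < n * (n * (W * V) ^ 2) := mul_lt_mul_of_pos_left (by nlinarith) hn
  nlinarith

/-- Sums of squared coordinates smaller than `1 / (n - 1)` times the squared sum force every
coordinate to be positive. -/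
lemma pos_of_sum_sq_lt {ι : Type*} [Fintype ι] (w : ι → ℝ) {B : ℝ} (hB : 0 < B)
    (hB1 : B ≤ 1) (hBd : B < Fintype.card ι) (hw : 0 < ∑ i, w i)
    (hw2 : (Fintype.card ι - B) * ∑ i, w i ^ 2 < (∑ i, w i) ^ 2) (i : ι) : 0 < w i := by
  classical
  have := sum_mul_pos_of_cone w (Pi.single i 1) hB hBd hw hw2 (by simp)
    (by simpa [Pi.single_apply, ite_pow] using hB1)
  simpa [Pi.single_apply] using this

section Spectrum

variable {ι : Type*} [Fintype ι] {μ : ι → ℝ} {α : ℝ}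

lemma abs_le_one_of_sum_sq_eq_one (h2 : ∑ i, μ i ^ 2 = 1) (i : ι) : |μ i| ≤ 1 := by
  rw [← sq_le_one_iff_abs_le_one, ← h2]
  exact Finset.single_le_sum (f := fun i => μ i ^ 2) (fun j _ => sq_nonneg _) (Finset.mem_univ i)

lemma one_sub_mul_pos (hα : 0 < α) (hα1 : α < 1) (h2 : ∑ i, μ i ^ 2 = 1) (i : ι) :
    0 < 1 - α * μ i := by
  have := (abs_le.1 (abs_le_one_of_sum_sq_eq_one h2 i)).2
  nlinarith

lemma sum_cube_le_one (h2 : ∑ i, μ i ^ 2 = 1) : ∑ i, μ i ^ 3 ≤ 1 := by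
  rw [← h2]
  refine Finset.sum_le_sum fun i _ => ?_
  have := (abs_le.1 (abs_le_one_of_sum_sq_eq_one h2 i)).2
  nlinarith [sq_nonneg (μ i)]

lemma sum_fourth_le_one (h2 : ∑ i, μ i ^ 2 = 1) : ∑ i, μ i ^ 4 ≤ 1 := by
  rw [← h2]
  refine Finset.sum_le_sum fun i _ => ?_
  have := (sq_le_one_iff_abs_le_one _).2 (abs_le_one_of_sum_sq_eq_one h2 i)
  nlinarith [sq_nonneg (μ i)]

lemma sum_weights (h1 : ∑ i, μ i = α) (h2 : ∑ i, μ i ^ 2 = 1) (τ : ℝ) :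
    ∑ i, (1 + τ * μ i) * (1 - α * μ i) = Fintype.card ι - α ^ 2 := by
  have : ∀ i, (1 + τ * μ i) * (1 - α * μ i) = 1 + (τ - α) * μ i - τ * α * μ i ^ 2 :=
    fun i => by ring
  simp only [this, Finset.sum_sub_distrib, Finset.sum_add_distrib, ← Finset.mul_sum, h1, h2]
  simp
  ring

lemma sum_weights_sq (h1 : ∑ i, μ i = α) (h2 : ∑ i, μ i ^ 2 = 1) (τ : ℝ) :
    ∑ i, ((1 + τ * μ i) * (1 - α * μ i)) ^ 2 =
      (1 - 2 * α * ∑ i, μ i ^ 3 + α ^ 2 * ∑ i, μ i ^ 4) * τ ^ 2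
        - 2 * (α * (1 - α * ∑ i, μ i ^ 3)) * τ + (Fintype.card ι - α ^ 2) := by
  have : ∀ i, ((1 + τ * μ i) * (1 - α * μ i)) ^ 2 = 1 + (2 * τ - 2 * α) * μ i
      + (τ ^ 2 - 4 * τ * α + α ^ 2) * μ i ^ 2 + (2 * τ * α ^ 2 - 2 * τ ^ 2 * α) * μ i ^ 3
      + τ ^ 2 * α ^ 2 * μ i ^ 4 := fun i => by ring
  simp only [this, Finset.sum_add_distrib, ← Finset.mul_sum, h1, h2]
  simp
  ring

lemma leading_coeff_pos (hα : 0 < α) (hα1 : α < 1) (h2 : ∑ i, μ i ^ 2 = 1) :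
    0 < 1 - 2 * α * ∑ i, μ i ^ 3 + α ^ 2 * ∑ i, μ i ^ 4 := by
  have hsum : 1 - 2 * α * ∑ i, μ i ^ 3 + α ^ 2 * ∑ i, μ i ^ 4
      = ∑ i, μ i ^ 2 * (1 - α * μ i) ^ 2 := by
    have : ∀ i, μ i ^ 2 * (1 - α * μ i) ^ 2
        = μ i ^ 2 - 2 * α * μ i ^ 3 + α ^ 2 * μ i ^ 4 := fun i => by ring
    simp only [this, Finset.sum_sub_distrib, Finset.sum_add_distrib, ← Finset.mul_sum, h2]
  rw [hsum]
  obtain ⟨i, hi⟩ : ∃ i, μ i ≠ 0 := by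
    by_contra! h
    simp [h] at h2
  refine Finset.sum_pos' (fun j _ => by positivity) ⟨i, Finset.mem_univ i, ?_⟩
  have := one_sub_mul_pos hα hα1 h2 i
  positivity

lemma half_lt_minimizer (hα : 0 < α) (hα1 : α < 1) (h2 : ∑ i, μ i ^ 2 = 1) :
    α / 2 < α * (1 - α * ∑ i, μ i ^ 3)
      / (1 - 2 * α * ∑ i, μ i ^ 3 + α ^ 2 * ∑ i, μ i ^ 4) := by
  rw [lt_div_iff₀ (leading_coeff_pos hα hα1 h2)]
  have h4 : α ^ 2 * ∑ i, μ i ^ 4 < 1 := by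
    have := sum_fourth_le_one h2
    nlinarith
  nlinarith

lemma sum_weights_sq_lt (hd : 2 ≤ Fintype.card ι) (hα : 0 < α) (hα1 : α < 1)
    (h1 : ∑ i, μ i = α) (h2 : ∑ i, μ i ^ 2 = 1) {τ : ℝ} (hτ : α / 2 ≤ τ)
    (hτ' : τ ≤ 2 * (α * (1 - α * ∑ i, μ i ^ 3)
      / (1 - 2 * α * ∑ i, μ i ^ 3 + α ^ 2 * ∑ i, μ i ^ 4)) - α / 2) :
    (Fintype.card ι - α ^ 2 * ((1 + α) / 2)) * ∑ i, ((1 + τ * μ i) * (1 - α * μ i)) ^ 2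
      < (∑ i, (1 + τ * μ i) * (1 - α * μ i)) ^ 2 := by
  rw [sum_weights h1 h2, sum_weights_sq h1 h2]
  have ha := leading_coeff_pos hα hα1 h2
  have h3 := sum_cube_le_one h2
  have h4 := sum_fourth_le_one h2
  have hd' : (2 : ℝ) ≤ Fintype.card ι := by exact_mod_cast hd
  generalize (Fintype.card ι : ℝ) = n at *
  generalize ∑ i, μ i ^ 3 = m3 at *
  generalize ∑ i, μ i ^ 4 = m4 at *
  have hle : (τ + α / 2) * (1 - 2 * α * m3 + α ^ 2 * m4) ≤ 2 * (α * (1 - α * m3)) := by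
    rw [← le_div_iff₀ ha, mul_div_assoc]
    linarith
  have hF : (1 - 2 * α * m3 + α ^ 2 * m4) * τ ^ 2 - 2 * (α * (1 - α * m3)) * τ + (n - α ^ 2)
      ≤ n - 7 / 4 * α ^ 2 + α ^ 4 / 4 + α ^ 3 / 2 := by
    have e1 := mul_le_mul_of_nonneg_left hle (sub_nonneg.2 hτ)
    have e2 := mul_le_mul_of_nonneg_left h3 (show 0 ≤ α ^ 3 / 2 by positivity)
    have e3 := mul_le_mul_of_nonneg_left h4 (show 0 ≤ α ^ 4 / 4 by positivity)
    linarith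
  have hα2 : α ^ 2 < 1 := by nlinarith
  have hα3 : α ^ 3 < 1 := by nlinarith
  have hα4 : α ^ 4 < 1 := by nlinarith
  have hB : 0 < n - α ^ 2 * ((1 + α) / 2) := by linarith
  refine (mul_le_mul_of_nonneg_left hF hB.le).trans_lt ?_
  have hbr : 0 < 2 * n * (1 + α) + α ^ 2 * (1 - 4 * α - α ^ 2) := by
    nlinarith [mul_le_mul_of_nonneg_right hd' (show 0 ≤ 1 + α by linarith)]
  have := mul_pos (mul_pos (show 0 < α ^ 2 / 8 by positivity) (sub_pos.2 hα1)) hbr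
  linarith

end Spectrum

lemma trace_conjStarAlgAut {n : Type*} [Fintype n] [DecidableEq n] (U : unitaryGroup n ℝ)
    (A : Matrix n n ℝ) : (conjStarAlgAut ℝ (Matrix n n ℝ) U A).trace = A.trace := by
  rw [conjStarAlgAut_apply, trace_mul_cycle]
  simp

/-- The dual-cone pairing for `E` and `S` simultaneously diagonalized by an orthogonal matrix. -/
lemma trace_mul_pos_of_mem_matQuadCone {d : ℕ} (U : unitaryGroup (Fin d) ℝ) (e s : Fin d → ℝ)
    (he : ∀ i, 0 < e i) {β : ℝ} (hβ : 0 < β) (hβd : β ^ 2 < d) (hpos : 0 < ∑ i, e i * s i)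
    (hlt : (d - β ^ 2) * ∑ i, (e i * s i) ^ 2 < (∑ i, e i * s i) ^ 2)
    {Z : Matrix (Fin d) (Fin d) ℝ}
    (hZ : Z ∈ matQuadCone (conjStarAlgAut ℝ _ U (diagonal e)) β) (hZ0 : Z ≠ 0) :
    0 < (conjStarAlgAut ℝ _ U (diagonal s) * Z).trace := by
  obtain ⟨hsymm, hcone⟩ := hZ
  set φ := conjStarAlgAut ℝ (Matrix (Fin d) (Fin d) ℝ) U
  obtain ⟨Y, rfl⟩ : ∃ Y, φ Y = Z := φ.surjective Z
  have hinv : (φ (diagonal e))⁻¹ = φ (diagonal fun i => (e i)⁻¹) := by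
    apply inv_eq_right_inv
    rw [← map_mul, diagonal_mul_diagonal]
    simp [fun i => (he i).ne']
  have hY0 : Y ≠ 0 := fun h => hZ0 (by simp [h])
  have hYsymm : ∀ i j, Y i j = Y j i := by
    have hstar : star (φ Y) = φ Y := by
      rw [star_eq_conjTranspose, conjTranspose_eq_transpose_of_trivial]
      exact hsymm
    rw [← map_star] at hstar
    have := φ.injective hstar
    intro i j
    simpa using congrFun (congrFun this j) i
  rw [hinv, ← map_mul, ← map_mul, trace_conjStarAlgAut, trace_conjStarAlgAut] at hcone
  rw [← map_mul, trace_conjStarAlgAut]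
  set b : Fin d → ℝ := fun i => (e i)⁻¹ * Y i i
  have htr : ((diagonal fun i => (e i)⁻¹) * Y).trace = ∑ i, b i := by
    simp [trace, b]
  have hQ : ((diagonal fun i => (e i)⁻¹) * Y * ((diagonal fun i => (e i)⁻¹) * Y)).trace
      = ∑ i, ∑ j, (e i)⁻¹ * (e j)⁻¹ * Y i j ^ 2 := by
    simp only [trace, diag_apply, mul_apply (M := diagonal _ * Y), diagonal_mul]
    refine Finset.sum_congr rfl fun i _ => Finset.sum_congr rfl fun j _ => ?_
    rw [hYsymm j i]
    ring
  have hterm : ∀ i j, 0 ≤ (e i)⁻¹ * (e j)⁻¹ * Y i j ^ 2 := fun i j => by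
    have := he i
    have := he j
    positivity
  rw [htr, hQ] at hcone
  have hQpos : 0 < ∑ i, ∑ j, (e i)⁻¹ * (e j)⁻¹ * Y i j ^ 2 := by
    obtain ⟨i, j, hij⟩ : ∃ i j, Y i j ≠ 0 := by
      by_contra! h
      exact hY0 (by ext i j; exact h i j)
    refine Finset.sum_pos' (fun k _ => Finset.sum_nonneg fun l _ => hterm k l)
      ⟨i, Finset.mem_univ i, Finset.sum_pos' (fun l _ => hterm i l) ⟨j, Finset.mem_univ j, ?_⟩⟩
    have := he i
    have := he j
    positivity
  have hdiag : ∑ i, b i ^ 2 ≤ ∑ i, ∑ j, (e i)⁻¹ * (e j)⁻¹ * Y i j ^ 2 := by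
    refine Finset.sum_le_sum fun i _ => ?_
    refine le_trans (le_of_eq ?_)
      (Finset.single_le_sum (fun l _ => hterm i l) (Finset.mem_univ i))
    simp only [b]
    ring
  set Q := ∑ i, ∑ j, (e i)⁻¹ * (e j)⁻¹ * Y i j ^ 2
  have hbpos : 0 < ∑ i, b i := (mul_pos hβ (Real.sqrt_pos.2 hQpos)).trans_le hcone
  have hb2 : β ^ 2 * ∑ i, b i ^ 2 ≤ (∑ i, b i) ^ 2 := by
    have := pow_le_pow_left₀ (by positivity) hcone 2
    rw [mul_pow, Real.sq_sqrt hQpos.le] at this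
    exact (mul_le_mul_of_nonneg_left hdiag (sq_nonneg β)).trans this
  have := sum_mul_pos_of_cone (fun i => e i * s i) b (pow_pos hβ 2) (by simpa using hβd) hpos
    (by simpa using hlt) hbpos hb2
  convert this using 1
  simp only [trace, diag_apply, diagonal_mul, b]
  refine Finset.sum_congr rfl fun i _ => ?_
  have := (he i).ne'
  field_simp

/-- Scaled spectral decomposition: a nonzero symmetric matrix is `n • φ (diagonal μ)` where `φ` is
an orthogonal conjugation, `n` is the Frobenius norm and `∑ μ i ^ 2 = 1`. -/
lemma exists_unit_spectrum {d : ℕ} {X : Matrix (Fin d) (Fin d) ℝ} (hX0 : X ≠ 0)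
    (hXs : X.IsSymm) : 0 < √((X * X).trace) ∧ ∃ (U : unitaryGroup (Fin d) ℝ) (μ : Fin d → ℝ),
      X = √((X * X).trace) • conjStarAlgAut ℝ _ U (diagonal μ) ∧ ∑ i, μ i ^ 2 = 1 := by
  have hH : X.IsHermitian := by
    rw [IsHermitian, conjTranspose_eq_transpose_of_trivial]
    exact hXs
  have hspec := hH.spectral_theorem
  set l := hH.eigenvalues
  set φ := conjStarAlgAut ℝ (Matrix (Fin d) (Fin d) ℝ) hH.eigenvectorUnitary
  have hdl : X = φ (diagonal l) := by simpa [Function.comp_def] using hspec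
  have htr : (X * X).trace = ∑ i, l i ^ 2 := by
    rw [hdl, ← map_mul, trace_conjStarAlgAut, diagonal_mul_diagonal, trace_diagonal]
    simp [sq]
  have hpos : 0 < (X * X).trace := by
    rw [htr]
    obtain ⟨i, hi⟩ : ∃ i, l i ≠ 0 := by
      by_contra! h
      exact hX0 (by rw [hdl, funext h]; simp)
    exact Finset.sum_pos' (fun j _ => sq_nonneg _) ⟨i, Finset.mem_univ i, by positivity⟩
  have hn := Real.sqrt_pos.2 hpos
  refine ⟨hn, hH.eigenvectorUnitary, fun i => l i / √((X * X).trace), ?_, ?_⟩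
  · rw [← map_smul]
    conv_lhs => rw [hdl]
    congr 1
    ext i j
    by_cases hij : i = j
    · subst hij
      simp only [diagonal_apply_eq, Matrix.smul_apply, smul_eq_mul]
      field_simp
    · simp [hij]
  · simp only [div_pow, Real.sq_sqrt hpos.le, ← Finset.sum_div, ← htr]
    exact div_self hpos.ne'

/-- Proposition 10.3 in RS14.
With `X`, `S`, `q(t) = tr(((I+tX)S)²)`, `E(t) = (1/(1+t))(I+tX)` and `β = α√((1+α)/2)`:
`q` is a strictly convex quadratic whose (strict, global) minimizer `t̄` satisfies
`t̄ > α/(2‖X‖_F)`, and with `δ = t̄ - α/(2‖X‖_F)`, for every `t ∈ [t̄-δ, t̄+δ]`,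
`E(t) ≻ 0` and `S ∈ int(K_{E(t)}(β)*)`, i.e. `tr(SZ) > 0` for every nonzero
`Z ∈ K_{E(t)}(β)`.  (Here `‖X‖_F = (tr X²)^{1/2}`.) -/
theorem stmt14 {d : ℕ} (hd : 2 ≤ d) (α : ℝ) (hα : 0 < α) (hα1 : α < 1)
    (X : Matrix (Fin d) (Fin d) ℝ) (hX0 : X ≠ 0) (hXs : X.IsSymm)
    (hXb : X.trace = α * Real.sqrt ((X * X).trace))
    (S : Matrix (Fin d) (Fin d) ℝ)
    (hS : S = ((d : ℝ) - α ^ 2)⁻¹ • ((1 : Matrix (Fin d) (Fin d) ℝ) - (α ^ 2 / X.trace) • X))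
    (q : ℝ → ℝ)
    (hq : ∀ t : ℝ, q t =
      ((((1 : Matrix (Fin d) (Fin d) ℝ) + t • X) * S) *
        (((1 : Matrix (Fin d) (Fin d) ℝ) + t • X) * S)).trace)
    (E : ℝ → Matrix (Fin d) (Fin d) ℝ)
    (hE : ∀ t : ℝ, E t = (1 + t)⁻¹ • ((1 : Matrix (Fin d) (Fin d) ℝ) + t • X))
    (β : ℝ) (hβ : β = α * Real.sqrt ((1 + α) / 2)) :
    (∃ a b c : ℝ, 0 < a ∧ ∀ t : ℝ, q t = a * t ^ 2 + b * t + c) ∧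
    ∃ tbar : ℝ,
      (∀ t : ℝ, t ≠ tbar → q tbar < q t) ∧
      α / (2 * Real.sqrt ((X * X).trace)) < tbar ∧
      ∀ t ∈ Set.Icc (tbar - (tbar - α / (2 * Real.sqrt ((X * X).trace))))
          (tbar + (tbar - α / (2 * Real.sqrt ((X * X).trace)))),
        (E t).PosDef ∧ ∀ Z ∈ matQuadCone (E t) β, Z ≠ 0 → 0 < (S * Z).trace := by
  obtain ⟨hn, U, μ, hX, h2⟩ := exists_unit_spectrum hX0 hXs
  set n := √((X * X).trace)
  set φ := conjStarAlgAut ℝ (Matrix (Fin d) (Fin d) ℝ) U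
  have h1 : ∑ i, μ i = α := by
    rw [hX, trace_smul, trace_conjStarAlgAut, trace_diagonal, smul_eq_mul, mul_comm] at hXb
    exact mul_right_cancel₀ hn.ne' hXb
  have hd' : (2 : ℝ) ≤ d := by exact_mod_cast hd
  have hα2 : α ^ 2 < 1 := by nlinarith
  have hκ : 0 < ((d : ℝ) - α ^ 2)⁻¹ := inv_pos.2 (by linarith)
  set κ := ((d : ℝ) - α ^ 2)⁻¹
  have hlin : ∀ c : ℝ, (1 : Matrix (Fin d) (Fin d) ℝ) + c • X
      = φ (diagonal fun i => 1 + c * n * μ i) := by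
    intro c
    rw [hX, smul_smul, ← map_smul, ← map_one φ, ← map_add]
    congr 1
    ext i j
    by_cases hij : i = j
    · subst hij; simp
    · simp [hij]
  have hSφ : S = φ (diagonal fun i => κ * (1 - α * μ i)) := by
    rw [hS, sub_eq_add_neg, ← neg_smul, hlin, ← map_smul]
    congr 1
    ext i j
    by_cases hij : i = j
    · subst hij
      simp only [diagonal_apply_eq, Matrix.smul_apply, smul_eq_mul, hXb]
      field_simp
      ring
    · simp [hij]
  have hEφ : ∀ t, E t = φ (diagonal fun i => (1 + t)⁻¹ * (1 + t * n * μ i)) := by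
    intro t
    rw [hE, hlin, ← map_smul]
    congr 1
    ext i j
    by_cases hij : i = j
    · subst hij; simp
    · simp [hij]
  set a := 1 - 2 * α * ∑ i, μ i ^ 3 + α ^ 2 * ∑ i, μ i ^ 4
  set p := α * (1 - α * ∑ i, μ i ^ 3)
  have ha : 0 < a := leading_coeff_pos hα hα1 h2
  have hmin : α / 2 < p / a := half_lt_minimizer hα hα1 h2
  have hqf : ∀ t, q t = κ ^ 2 * (a * (t * n) ^ 2 - 2 * p * (t * n) + (d - α ^ 2)) := by
    intro t
    have hsq := sum_weights_sq h1 h2 (t * n)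
    rw [Fintype.card_fin] at hsq
    rw [← hsq, hq, hlin, hSφ, ← map_mul, ← map_mul, trace_conjStarAlgAut,
      diagonal_mul_diagonal, diagonal_mul_diagonal, trace_diagonal, Finset.mul_sum]
    exact Finset.sum_congr rfl fun i _ => by ring
  refine ⟨⟨κ ^ 2 * a * n ^ 2, -(2 * κ ^ 2 * p * n), κ ^ 2 * (d - α ^ 2), by positivity,
    fun t => by rw [hqf]; ring⟩, p / a / n, ?_, ?_, ?_⟩
  · intro t ht
    have hsub : q t - q (p / a / n) = κ ^ 2 * a * n ^ 2 * (t - p / a / n) ^ 2 := by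
      rw [hqf, hqf]
      field_simp
      ring
    have : 0 < (t - p / a / n) ^ 2 := by
      have := sub_ne_zero.2 ht
      positivity
    have : 0 < q t - q (p / a / n) := hsub ▸ by positivity
    linarith
  · rw [← div_div]
    exact div_lt_div_of_pos_right hmin hn
  · rintro t ⟨htl, htu⟩
    rw [← div_div] at htl htu
    have hτ : α / 2 ≤ t * n := by
      rw [← div_le_iff₀ hn]
      linarith
    have hτ' : t * n ≤ 2 * (p / a) - α / 2 := by
      rw [← le_div_iff₀ hn]
      calc t ≤ _ := htu
        _ = _ := by ring
    have ht : 0 < t := pos_of_mul_pos_left (by linarith) hn.le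
    have hσ : 0 < (1 + t)⁻¹ := by positivity
    have hlt := sum_weights_sq_lt (by simpa using hd) hα hα1 h1 h2 hτ hτ'
    have hsum := sum_weights h1 h2 (t * n)
    have hβ2 : β ^ 2 = α ^ 2 * ((1 + α) / 2) := by
      rw [hβ, mul_pow, Real.sq_sqrt (by linarith)]
    have hβ0 : 0 < β := hβ ▸ mul_pos hα (Real.sqrt_pos.2 (by linarith))
    have hβ1 : β ^ 2 ≤ 1 := by rw [hβ2]; nlinarith
    rw [← hβ2] at hlt
    have hwpos : 0 < ∑ i, (1 + t * n * μ i) * (1 - α * μ i) := by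
      rw [hsum, Fintype.card_fin]
      linarith
    have hw := pos_of_sum_sq_lt _ (pow_pos hβ0 2) hβ1 (by rw [Fintype.card_fin]; linarith)
      hwpos hlt
    rw [Fintype.card_fin] at hlt
    have he : ∀ i, 0 < (1 + t)⁻¹ * (1 + t * n * μ i) := fun i =>
      mul_pos hσ (pos_of_mul_pos_left (hw i) (one_sub_mul_pos hα hα1 h2 i).le)
    have hes : ∀ i, (1 + t)⁻¹ * (1 + t * n * μ i) * (κ * (1 - α * μ i))
        = (1 + t)⁻¹ * κ * ((1 + t * n * μ i) * (1 - α * μ i)) := fun i => by ring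
    rw [hEφ, hSφ]
    refine ⟨?_, fun Z hZ hZ0 => trace_mul_pos_of_mem_matQuadCone U _ _ he hβ0 (by linarith)
      ?_ ?_ hZ hZ0⟩
    · exact (IsUnit.posDef_star_right_conjugate_iff
        (Units.isUnit (Unitary.toUnits U))).2 (posDef_diagonal_iff.2 he)
    · simp only [hes, ← Finset.mul_sum]
      positivity
    · simp only [hes, mul_pow _ (_ * _), ← Finset.mul_sum]
      have := mul_lt_mul_of_pos_left hlt (show 0 < ((1 + t)⁻¹ * κ) ^ 2 by positivity)
      linarith
end
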